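/- Let X(S) be a sofic S-gap shift with Fischer cover 𝒢 = (G, ℒ). Then every state of M_G contains the same number of vertices of G. -/

import Mathlib

/-! ## Basic symbolic dynamics over `ℤ` -/

/-- The shift map on bi-infinite sequences. -/
def shiftMap {A : Type} (x : ℤ → A) : ℤ → A := fun i => x (i + 1)

/-- The word `w` occurs in `x` starting at coordinate `i`. -/
def occursAt {A : Type} (w : List A) (x : ℤ → A) (i : ℤ) : Prop :=
  ∀ (k : ℕ) (h : k < w.length), x (i + k) = w.get ⟨k, h⟩

/-- The word `w` occurs somewhere in `x`. -/
def occursIn {A : Type} (w : List A) (x : ℤ → A) : Prop := ∃ i : ℤ, occursAt w x i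

/-- The word `w` belongs to the language of `X`. -/
def InLang {A : Type} (X : Set (ℤ → A)) (w : List A) : Prop := ∃ x ∈ X, occursIn w x

/-- `X` is a subshift: it is defined by a set of forbidden words. -/
def IsSubshift {A : Type} (X : Set (ℤ → A)) : Prop :=
  ∃ F : Set (List A), X = { x | ∀ w ∈ F, ¬ occursIn w x }

/-- `X` is a shift of finite type: defined by a finite set of forbidden words. -/
def IsSFT {A : Type} (X : Set (ℤ → A)) : Prop :=
  ∃ F : Finset (List A), X = { x | ∀ w ∈ F, ¬ occursIn w x }

/-- `φ` is a sliding block code on `X` (with some memory `m` and anticipation `n`). -/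
def IsSliding {A B : Type} (X : Set (ℤ → A)) (φ : (ℤ → A) → ℤ → B) : Prop :=
  ∃ m n : ℕ, ∀ x ∈ X, ∀ y ∈ X, ∀ i : ℤ,
    (∀ j : ℤ, i - (m : ℤ) ≤ j → j ≤ i + (n : ℤ) → x j = y j) → φ x i = φ y i

/-- `φ` is a factor code from `X` onto `Y`. -/
def IsFactorCode {A B : Type} (X : Set (ℤ → A)) (Y : Set (ℤ → B))
    (φ : (ℤ → A) → ℤ → B) : Prop :=
  IsSliding X φ ∧ (∀ x ∈ X, φ x ∈ Y) ∧ (∀ y ∈ Y, ∃ x ∈ X, φ x = y) ∧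
    (∀ x ∈ X, φ (shiftMap x) = shiftMap (φ x))

/-- `X` and `Y` are topologically conjugate (via mutually inverse sliding block codes). -/
def TopConjugate {A B : Type} (X : Set (ℤ → A)) (Y : Set (ℤ → B)) : Prop :=
  ∃ (φ : (ℤ → A) → ℤ → B) (ψ : (ℤ → B) → ℤ → A),
    IsFactorCode X Y φ ∧ IsFactorCode Y X ψ ∧
    (∀ x ∈ X, ψ (φ x) = x) ∧ (∀ y ∈ Y, φ (ψ y) = y)

/-- `φ` is a right-resolving (1-block) code on `X`: it is induced by a symbol map `Φ`
such that whenever `ab` and `ac` are 2-blocks of `X` with `Φ b = Φ c`, then `b = c`. -/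
def IsRightResolvingCode {A B : Type} (X : Set (ℤ → A)) (φ : (ℤ → A) → ℤ → B) : Prop :=
  ∃ Φ : A → B, (∀ x ∈ X, ∀ i : ℤ, φ x i = Φ (x i)) ∧
    ∀ a b c : A, InLang X [a, b] → InLang X [a, c] → Φ b = Φ c → b = c

/-- `x` is a doubly transitive point of `X`. -/
def DoublyTransitive {A : Type} (X : Set (ℤ → A)) (x : ℤ → A) : Prop :=
  ∀ w : List A, InLang X w →
    (∀ N : ℤ, ∃ i ≥ N, occursAt w x i) ∧ (∀ N : ℤ, ∃ i ≤ N, occursAt w x i)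

/-- `φ : W → Y` is one-to-one almost everywhere: every doubly transitive point of `Y`
has exactly one preimage in `W`. -/
def OneOneAE {A B : Type} (W : Set (ℤ → A)) (Y : Set (ℤ → B))
    (φ : (ℤ → A) → ℤ → B) : Prop :=
  ∀ y ∈ Y, DoublyTransitive Y y → ∃! x, x ∈ W ∧ φ x = y

/-- `φ` is finite-to-one on `W` (uniformly bounded fibers). -/
def FiniteToOne {A B : Type} (W : Set (ℤ → A)) (φ : (ℤ → A) → ℤ → B) : Prop :=
  ∃ M : ℕ, ∀ y : ℤ → B, { x ∈ W | φ x = y }.Finite ∧ { x ∈ W | φ x = y }.ncard ≤ M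

/-- `X` and `Y` are right-resolving almost conjugate. -/
def RRAlmostConjugate {A B : Type} (X : Set (ℤ → A)) (Y : Set (ℤ → B)) : Prop :=
  ∃ (C : Type) (_ : Finite C) (W : Set (ℤ → C))
    (φX : (ℤ → C) → ℤ → A) (φY : (ℤ → C) → ℤ → B),
    IsSFT W ∧ IsFactorCode W X φX ∧ IsFactorCode W Y φY ∧
    IsRightResolvingCode W φX ∧ IsRightResolvingCode W φY ∧
    OneOneAE W X φX ∧ OneOneAE W Y φY

/-- `X` and `Y` are right-resolving finitely equivalent. -/
def RRFinEquiv {A B : Type} (X : Set (ℤ → A)) (Y : Set (ℤ → B)) : Prop :=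
  ∃ (C : Type) (_ : Finite C) (W : Set (ℤ → C))
    (φX : (ℤ → C) → ℤ → A) (φY : (ℤ → C) → ℤ → B),
    IsSFT W ∧ IsFactorCode W X φX ∧ IsFactorCode W Y φY ∧
    IsRightResolvingCode W φX ∧ IsRightResolvingCode W φY ∧
    FiniteToOne W φX ∧ FiniteToOne W φY

/-- An irreducible shift space. -/
def IrreducibleShift {A : Type} (X : Set (ℤ → A)) : Prop :=
  ∀ u w : List A, InLang X u → InLang X w → ∃ v : List A, InLang X (u ++ v ++ w)

/-- `v` is a synchronizing word for `X`. -/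
def SynchronizingWord {A : Type} (X : Set (ℤ → A)) (v : List A) : Prop :=
  InLang X v ∧ ∀ u w : List A, InLang X (u ++ v) → InLang X (v ++ w) →
    InLang X (u ++ v ++ w)

/-- A synchronized system: an irreducible subshift with a synchronizing word. -/
def Synchronized {A : Type} (X : Set (ℤ → A)) : Prop :=
  IsSubshift X ∧ IrreducibleShift X ∧ ∃ v : List A, SynchronizingWord X v

/-! ## S-gap shifts and β-shifts -/

/-- The S-gap shift `X(S)` for `S ⊆ ℕ ∪ {0}`: numbers of `0`s between successive `1`s
lie in `S`; `1`s occur infinitely often in both directions unless `S` is infinite. -/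
def SGap (S : Set ℕ) : Set (ℤ → Fin 2) :=
  { x | (∀ i j : ℤ, i < j → x i = 1 → x j = 1 →
          (∀ k : ℤ, i < k → k < j → x k = 0) → (j - i - 1).toNat ∈ S) ∧
        (S.Finite → (∀ N : ℤ, ∃ i ≥ N, x i = 1) ∧ (∀ N : ℤ, ∃ i ≤ N, x i = 1)) }

/-- Remainders of the (greedy) β-expansion of `1` with digits in `{0,1}`:
`betaRem β n = 1 - Σ_{i ≤ n} a_i β^{-i}`. -/
noncomputable def betaRem (β : ℝ) : ℕ → ℝ
  | 0 => 1
  | n + 1 => betaRem β n - (if β⁻¹ ^ (n + 1) ≤ betaRem β n then β⁻¹ ^ (n + 1) else 0)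

/-- The digit `a_{n+1}` of the β-expansion `1_β = a_1 a_2 a_3 ⋯` of `1`. -/
noncomputable def betaDigit (β : ℝ) (n : ℕ) : Fin 2 :=
  if β⁻¹ ^ (n + 1) ≤ betaRem β n then 1 else 0

/-- Lexicographic order on one-sided sequences. -/
def lexLE {A : Type} [LinearOrder A] (u v : ℕ → A) : Prop :=
  u = v ∨ ∃ n : ℕ, (∀ k < n, u k = v k) ∧ u n < v n

/-- The β-shift: `x ∈ X_β` iff every right tail of `x` is lexicographically `≤ 1_β`. -/
def betaShift (β : ℝ) : Set (ℤ → Fin 2) :=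
  { x | ∀ i : ℤ, lexLE (fun n : ℕ => x (i + (n : ℤ))) (betaDigit β) }

/-- The set `S = {i - 1 : a_i = 1}` of the associated S-gap shift `ASS(X_β) = X(S)`. -/
def assocS (β : ℝ) : Set ℕ := { n | betaDigit β n = 1 }

/-- Eventual periodicity of a sequence. -/
def EvPeriodic {α : Type} (a : ℕ → α) : Prop :=
  ∃ p : ℕ, 0 < p ∧ ∃ N : ℕ, ∀ n ≥ N, a (n + p) = a n

/-! ## Finite directed multigraphs, edge shifts, labeled graphs -/

structure FinGraph where
  V : Type
  E : Type
  [fintypeV : Fintype V]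
  [fintypeE : Fintype E]
  src : E → V
  tgt : E → V

attribute [instance] FinGraph.fintypeV FinGraph.fintypeE

/-- The edge shift of a graph. -/
def FinGraph.edgeShift (G : FinGraph) : Set (ℤ → G.E) :=
  { ξ | ∀ i : ℤ, G.tgt (ξ i) = G.src (ξ (i + 1)) }

structure GraphHom (G H : FinGraph) where
  vmap : G.V → H.V
  emap : G.E → H.E
  src_eq : ∀ e : G.E, H.src (emap e) = vmap (G.src e)
  tgt_eq : ∀ e : G.E, H.tgt (emap e) = vmap (G.tgt e)

structure GraphIso (G H : FinGraph) where
  vmap : G.V ≃ H.V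
  emap : G.E ≃ H.E
  src_eq : ∀ e : G.E, H.src (emap e) = vmap (G.src e)
  tgt_eq : ∀ e : G.E, H.tgt (emap e) = vmap (G.tgt e)

/-- `H ⪯ G` : the edge shift `X_H` is a right-resolving factor of `X_G`,
via a graph homomorphism whose restriction to each out-edge set is injective. -/
def RRFactorOf (H G : FinGraph) : Prop :=
  ∃ Φ : GraphHom G H,
    (∀ η ∈ H.edgeShift, ∃ ξ ∈ G.edgeShift, ∀ i : ℤ, Φ.emap (ξ i) = η i) ∧
    ∀ I : G.V, Set.InjOn Φ.emap { e : G.E | G.src e = I }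

/-- `M` is the minimal right-resolving factor graph `M_G` of `G`: it is the smallest
element in the order `⪯` on graphs right-resolving-factoring from `G`. -/
def IsMinFactorGraph (M G : FinGraph) : Prop :=
  RRFactorOf M G ∧ ∀ H : FinGraph, RRFactorOf H G → RRFactorOf M H

/-- The nested sequence of equivalence relations `∼ₙ` on vertices of `G` whose limiting
partition gives the states of `M_G`. -/
def simRel (G : FinGraph) : ℕ → G.V → G.V → Prop
  | 0, _, _ => True
  | n + 1, I, J => ∀ K : G.V,
      { e : G.E | G.src e = I ∧ simRel G n (G.tgt e) K }.ncard =
      { e : G.E | G.src e = J ∧ simRel G n (G.tgt e) K }.ncard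

/-- The limiting equivalence relation; its classes are the states of `M_G`. -/
def simLim (G : FinGraph) (I J : G.V) : Prop := ∀ n : ℕ, simRel G n I J

/-- A labeled graph over the alphabet `A`. -/
structure LGraph (A : Type) where
  G : FinGraph
  label : G.E → A

def LGraph.RightResolving {A : Type} (𝒢 : LGraph A) : Prop :=
  ∀ e f : 𝒢.G.E, 𝒢.G.src e = 𝒢.G.src f → 𝒢.label e = 𝒢.label f → e = f

/-- `𝒢` presents the shift space `X`: `X = ℒ_∞(X_G)`. -/
def LGraph.Presents {A : Type} (𝒢 : LGraph A) (X : Set (ℤ → A)) : Prop :=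
  X = { x | ∃ ξ ∈ 𝒢.G.edgeShift, ∀ i : ℤ, 𝒢.label (ξ i) = x i }

def FinGraph.Irreducible (G : FinGraph) : Prop :=
  ∀ I J : G.V, Relation.ReflTransGen (fun u v => ∃ e : G.E, G.src e = u ∧ G.tgt e = v) I J

/-- A sofic shift: one presented by a finite labeled graph. -/
def IsSofic {A : Type} (X : Set (ℤ → A)) : Prop := ∃ 𝒢 : LGraph A, 𝒢.Presents X

/-- The Fischer cover: the minimal right-resolving presentation of an irreducible
sofic shift. -/
def IsFischerCover {A : Type} (𝒢 : LGraph A) (X : Set (ℤ → A)) : Prop :=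
  𝒢.G.Irreducible ∧ 𝒢.RightResolving ∧ 𝒢.Presents X ∧
    ∀ ℋ : LGraph A, ℋ.RightResolving → ℋ.Presents X →
      Fintype.card 𝒢.G.V ≤ Fintype.card ℋ.G.V

/-! ## Countable labeled graphs (for almost Markov systems) -/

structure CtblLGraph (A : Type) where
  V : Type
  E : Type
  ctblV : Countable V
  ctblE : Countable E
  src : E → V
  tgt : E → V
  label : E → A

def CtblLGraph.RightResolving {A : Type} (𝒢 : CtblLGraph A) : Prop :=
  ∀ e f : 𝒢.E, 𝒢.src e = 𝒢.src f → 𝒢.label e = 𝒢.label f → e = f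

def CtblLGraph.Irreducible {A : Type} (𝒢 : CtblLGraph A) : Prop :=
  ∀ I J : 𝒢.V, Relation.ReflTransGen (fun u v => ∃ e : 𝒢.E, 𝒢.src e = u ∧ 𝒢.tgt e = v) I J

/-- `w` is the label of some finite path in `𝒢`. -/
def CtblLGraph.IsPathLabel {A : Type} (𝒢 : CtblLGraph A) (w : List A) : Prop :=
  ∃ es : List 𝒢.E, es.map 𝒢.label = w ∧ es.Chain' (fun e f => 𝒢.tgt e = 𝒢.src f)

/-- `𝒢` presents `X` (on the level of languages). -/
def CtblLGraph.PresentsLang {A : Type} (𝒢 : CtblLGraph A) (X : Set (ℤ → A)) : Prop :=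
  ∀ w : List A, InLang X w ↔ 𝒢.IsPathLabel w

/-- An almost Markov system: it has a right-resolving presentation by a countable
irreducible labeled graph. -/
def AlmostMarkov {A : Type} (X : Set (ℤ → A)) : Prop :=
  ∃ 𝒢 : CtblLGraph A, 𝒢.RightResolving ∧ 𝒢.Irreducible ∧ 𝒢.PresentsLang X

/-! ## Words `𝒟(S)`, primitivity -/

/-- The word `𝒟(S) = d_1 d_2 ⋯ d_{k-2} (d_{k-1} + s_0 + 1)` for `S = {s_0 < ⋯ < s_{k-1}}`
enumerated by `s`. -/
def DSword (k : ℕ) (s : ℕ → ℕ) : List ℕ :=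
  (List.range (k - 1)).map fun i =>
    if i + 2 < k then s (i + 1) - s i else s (i + 1) - s i + s 0 + 1

/-- The word `𝒟(S)` of a finite set `S = {s_0 < s_1 < ⋯ < s_{k-1}}` of naturals. -/
def gapWord (F : Finset ℕ) : List ℕ :=
  let l := F.sort (· ≤ ·)
  (List.range (l.length - 1)).map fun i =>
    if i + 2 < l.length then l.getD (i + 1) 0 - l.getD i 0
    else l.getD (i + 1) 0 - l.getD i 0 + l.getD 0 0 + 1

/-- `q` is a period of the word `w` (in the sense `w = u^{|w|/q}` with `|u| = q`). -/
def ListPeriod (w : List ℕ) (q : ℕ) : Prop :=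
  0 < q ∧ q ∣ w.length ∧ ∀ i : ℕ, i + q < w.length → w.getD i 0 = w.getD (i + q) 0

/-- A word is primitive if its least period equals its length. -/
def ListPrimitive (w : List ℕ) : Prop := ∀ q : ℕ, ListPeriod w q → q = w.length

/-! ## Entropy, periodic points and zeta functions -/

/-- The number of words of length `n` in the language of `X`. -/
noncomputable def wordCount {A : Type} (X : Set (ℤ → A)) (n : ℕ) : ℕ :=
  { w : List A | w.length = n ∧ InLang X w }.ncard

/-- `X` has topological entropy `h`, i.e. `(1/n) log |ℬ_n(X)| → h`. -/
def HasEntropy {A : Type} (X : Set (ℤ → A)) (h : ℝ) : Prop :=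
  Filter.Tendsto (fun n : ℕ => Real.log (wordCount X n) / n) Filter.atTop (nhds h)

/-- The topological entropy of `X`. -/
noncomputable def entropy {A : Type} (X : Set (ℤ → A)) : ℝ :=
  Filter.atTop.limsup fun n : ℕ => Real.log (wordCount X n) / n

/-- The set of points of `X` of period `n`. -/
def perPts {A : Type} (X : Set (ℤ → A)) (n : ℕ) : Set (ℤ → A) :=
  { x ∈ X | shiftMap^[n] x = x }

/-- `p_n`, the number of points of period `n`. -/
noncomputable def pcount {A : Type} (X : Set (ℤ → A)) (n : ℕ) : ℕ := (perPts X n).ncard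

/-- The exponential of a formal power series (intended for zero constant term). -/
noncomputable def expPS (g : PowerSeries ℚ) : PowerSeries ℚ :=
  PowerSeries.mk fun n =>
    ∑ k ∈ Finset.range (n + 1), (PowerSeries.coeff n (g ^ k)) / (Nat.factorial k : ℚ)

/-- The Artin–Mazur zeta function `ζ_σ(t) = exp (Σ_{n ≥ 1} (p_n / n) tⁿ)` of `X`. -/
noncomputable def zetaPS {A : Type} (X : Set (ℤ → A)) : PowerSeries ℚ :=
  expPS (PowerSeries.mk fun n => if n = 0 then 0 else (pcount X n : ℚ) / (n : ℚ))

/-! ## Continued fractions parametrization of S-gap shifts -/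

/-- The value of a finite continued fraction `[a_0; a_1, …, a_n]`. -/
def cfVal : List ℕ → ℚ
  | [] => 0
  | [a] => (a : ℚ)
  | a :: rest => (a : ℚ) + 1 / cfVal rest

/-- The sequence `d_0 = s_0`, `d_n = s_n - s_{n-1}` of gap differences of `S`. -/
noncomputable def dSeq (S : Set ℕ) (n : ℕ) : ℕ :=
  if n = 0 then Nat.nth (· ∈ S) 0 else Nat.nth (· ∈ S) n - Nat.nth (· ∈ S) (n - 1)

open scoped Classical in
/-- The real number `x_S = [d_0; d_1, d_2, …]` assigned to the S-gap shift `X(S)`. -/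
noncomputable def xOf (S : Set ℕ) : ℝ :=
  if hS : S.Finite then ((cfVal ((List.range hS.toFinset.card).map (dSeq S)) : ℚ) : ℝ)
  else Filter.atTop.limsup fun n : ℕ =>
    ((cfVal ((List.range (n + 1)).map (dSeq S)) : ℚ) : ℝ)

/-!
Write `F(v)` for the set of words readable along paths starting at the vertex `v` of the Fischer
cover. Identifying vertices with equal `F(v)` gives a right-resolving presentation again, so by
minimality `F` separates vertices; hence every vertex is the only end of the paths carrying some
word. The symbol `1` is synchronizing for `X(S)`: a point may be replaced to the right of a `1` by
any other point seen from a `1`. Therefore all edges labeled `1` end at one vertex `r`.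

Let `σ` send `v` to the end of its `0`-edge, or to `r` if there is none. Counting out-edges shows
that `σ` preserves the limiting equivalence. If every vertex has a `0`-edge, equivalent vertices
have the same labels on their out-edges, hence the same `F`, and all classes are singletons.
Otherwise `σ` is a cyclic permutation of the vertices, and the class sizes, being nondecreasing
along `σ`, are all equal.
-/

/-! ### Essential graphs -/

/-- A graph is essential if every vertex starts an edge and every vertex ends an edge, so that
every path extends to a bi-infinite one. -/
structure FinGraph.Essential (G : FinGraph) : Prop where
  exists_src_eq : ∀ v, ∃ e, G.src e = v
  exists_tgt_eq : ∀ v, ∃ e, G.tgt e = v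

theorem FinGraph.Irreducible.essential {G : FinGraph} [Nontrivial G.V] (hG : G.Irreducible) :
    G.Essential where
  exists_src_eq v := by
    obtain ⟨u, hu⟩ := exists_ne v
    rcases (hG v u).cases_head with rfl | ⟨-, ⟨e, he, -⟩, -⟩
    · exact absurd rfl hu
    · exact ⟨e, he⟩
  exists_tgt_eq v := by
    obtain ⟨u, hu⟩ := exists_ne v
    rcases (hG u v).cases_tail with rfl | ⟨-, -, ⟨e, -, he⟩⟩
    · exact absurd rfl hu
    · exact ⟨e, he⟩

theorem FinGraph.Essential.exists_backward_ray {G : FinGraph} (hG : G.Essential) (v : G.V) :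
    ∃ f : ℕ → G.E, G.tgt (f 0) = v ∧ ∀ n, G.tgt (f (n + 1)) = G.src (f n) := by
  choose pred tgt_pred using hG.exists_tgt_eq
  exact ⟨fun n => n.rec (pred v) fun _ e => pred (G.src e), tgt_pred v, fun _ => tgt_pred _⟩

theorem FinGraph.Essential.exists_ray {G : FinGraph} (hG : G.Essential) (v : G.V) :
    ∃ f : ℕ → G.E, G.src (f 0) = v ∧ ∀ n, G.tgt (f n) = G.src (f (n + 1)) := by
  choose out src_out using hG.exists_src_eq
  exact ⟨fun n => n.rec (out v) fun _ e => out (G.tgt e), src_out v, fun _ => (src_out _).symm⟩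

theorem FinGraph.isClosed_edgeShift (G : FinGraph) [TopologicalSpace G.E] [DiscreteTopology G.E] :
    IsClosed G.edgeShift := by
  have hpath : G.edgeShift =
      ⋂ i : ℤ, (fun ξ : ℤ → G.E => (ξ i, ξ (i + 1))) ⁻¹' { p | G.tgt p.1 = G.src p.2 } := by
    ext ξ
    simp only [FinGraph.edgeShift, Set.mem_ofPred_eq, Set.mem_iInter, Set.mem_preimage]
  rw [hpath]
  exact isClosed_iInter fun i => (isClosed_discrete _).preimage (by fun_prop)

/-! ### Walks and follower sets -/

theorem occursAt_cons {A : Type} {a : A} {w : List A} {x : ℤ → A} {i : ℤ} :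
    occursAt (a :: w) x i ↔ x i = a ∧ occursAt w x (i + 1) := by
  constructor
  · intro h
    refine ⟨by simpa using h 0 (by simp), fun k hk => ?_⟩
    have := h (k + 1) (by simpa using hk)
    rwa [Nat.cast_succ, add_comm (k : ℤ), ← add_assoc] at this
  · rintro ⟨h0, h⟩ (- | k) hk
    · simpa using h0
    · have := h k (by simpa using hk)
      rwa [add_assoc, add_comm 1 (k : ℤ), ← Nat.cast_succ] at this

theorem occursAt_append {A : Type} {u v : List A} {x : ℤ → A} {i : ℤ} :
    occursAt (u ++ v) x i ↔ occursAt u x i ∧ occursAt v x (i + u.length) := by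
  induction u generalizing i with
  | nil => simp [occursAt]
  | cons a u ih =>
    rw [List.cons_append, occursAt_cons, occursAt_cons, ih, and_assoc, List.length_cons,
      Nat.cast_succ, add_assoc, add_comm 1]

namespace LGraph

variable {A : Type} {L : LGraph A} {X : Set (ℤ → A)}

/-- `L.Walk w u v`: the word `w` is the label of a path from `u` to `v`. -/
def Walk (L : LGraph A) : List A → L.G.V → L.G.V → Prop
  | [], u, v => u = v
  | a :: w, u, v => ∃ e, L.G.src e = u ∧ L.label e = a ∧ L.Walk w (L.G.tgt e) v

/-- The words that label a path starting at `v`. -/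
def followerSet (L : LGraph A) (v : L.G.V) : Set (List A) := { w | ∃ u, L.Walk w v u }

/-- The vertices at which a path labeled `w` ends; `w` is synchronizing for `L` when this set is
a singleton. -/
def terminals (L : LGraph A) (w : List A) : Set L.G.V := { v | ∃ u, L.Walk w u v }

theorem walk_append {w w' : List A} {u v : L.G.V} :
    L.Walk (w ++ w') u v ↔ ∃ m, L.Walk w u m ∧ L.Walk w' m v := by
  induction w generalizing u with
  | nil => simp [Walk]
  | cons a w ih => simp only [List.cons_append, Walk, ih]; grind

theorem RightResolving.walk_unique (hr : L.RightResolving) {w : List A} {u v v' : L.G.V}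
    (h : L.Walk w u v) (h' : L.Walk w u v') : v = v' := by
  induction w generalizing u with
  | nil => exact h.symm.trans h'
  | cons a w ih =>
    obtain ⟨e, hsrc, hlabel, h⟩ := h
    obtain ⟨f, hsrc', hlabel', h'⟩ := h'
    obtain rfl : e = f := hr e f (hsrc.trans hsrc'.symm) (hlabel.trans hlabel'.symm)
    exact ih h h'

theorem exists_walk (hi : L.G.Irreducible) (u v : L.G.V) : ∃ w, L.Walk w u v := by
  induction hi u v using Relation.ReflTransGen.head_induction_on with
  | refl => exact ⟨[], rfl⟩
  | head h _ ih =>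
    obtain ⟨e, rfl, rfl⟩ := h
    obtain ⟨w, hw⟩ := ih
    exact ⟨L.label e :: w, e, rfl, rfl, hw⟩

theorem cons_mem_followerSet {a : A} {w : List A} {v : L.G.V} :
    a :: w ∈ L.followerSet v ↔
      ∃ e, L.G.src e = v ∧ L.label e = a ∧ w ∈ L.followerSet (L.G.tgt e) :=
  ⟨fun ⟨u, e, hsrc, hlabel, h⟩ => ⟨e, hsrc, hlabel, u, h⟩,
    fun ⟨e, hsrc, hlabel, u, h⟩ => ⟨u, e, hsrc, hlabel, h⟩⟩

theorem RightResolving.label_cons_mem_followerSet (hr : L.RightResolving) (e : L.G.E)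
    {w : List A} :
    L.label e :: w ∈ L.followerSet (L.G.src e) ↔ w ∈ L.followerSet (L.G.tgt e) := by
  refine cons_mem_followerSet.trans ⟨?_, fun h => ⟨e, rfl, rfl, h⟩⟩
  rintro ⟨f, hsrc, hlabel, h⟩
  obtain rfl := hr f e hsrc hlabel
  exact h

theorem mem_terminals_append {w w' : List A} {v : L.G.V} :
    v ∈ L.terminals (w ++ w') ↔ ∃ m ∈ L.terminals w, L.Walk w' m v := by
  simp only [terminals, Set.mem_ofPred_eq, walk_append]
  grind

theorem RightResolving.terminals_append_eq_singleton (hr : L.RightResolving) {w w' : List A}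
    {u v : L.G.V} (hw : L.terminals w = {u}) (hw' : L.Walk w' u v) :
    L.terminals (w ++ w') = {v} := by
  ext z
  simp only [mem_terminals_append, hw, Set.mem_singleton_iff, exists_eq_left]
  exact ⟨fun hz => hr.walk_unique hz hw', fun hz => hz ▸ hw'⟩

/-! ### The language of a presented shift -/

theorem walk_of_occursAt {x : ℤ → A} {ξ : ℤ → L.G.E} (hξ : ξ ∈ L.G.edgeShift)
    (hlabel : ∀ i, L.label (ξ i) = x i) {w : List A} {i : ℤ} (hw : occursAt w x i) :
    ∃ v, L.Walk w (L.G.src (ξ i)) v := by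
  induction w generalizing i with
  | nil => exact ⟨_, rfl⟩
  | cons a w ih =>
    obtain ⟨hxi, hw⟩ := occursAt_cons.1 hw
    obtain ⟨v, hv⟩ := ih hw
    exact ⟨v, ξ i, rfl, (hlabel i).trans hxi, by rwa [hξ i]⟩

theorem Walk.exists_ray (hG : L.G.Essential) {w : List A} {u v : L.G.V} (h : L.Walk w u v) :
    ∃ f : ℕ → L.G.E, L.G.src (f 0) = u ∧ (∀ n, L.G.tgt (f n) = L.G.src (f (n + 1))) ∧
      ∀ (k : ℕ) (hk : k < w.length), L.label (f k) = w[k] := by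
  induction w generalizing u with
  | nil =>
    obtain ⟨f, hf0, hf⟩ := hG.exists_ray u
    exact ⟨f, hf0, hf, by simp⟩
  | cons a w ih =>
    obtain ⟨e, hsrc, hlabel, h⟩ := h
    obtain ⟨f, hf0, hf, hfw⟩ := ih h
    refine ⟨fun n => n.casesOn e f, hsrc, ?_, ?_⟩
    · rintro (- | n)
      exacts [hf0.symm, hf n]
    · rintro (- | k) hk
      exacts [hlabel, hfw k (by simpa using hk)]

theorem Presents.inLang_iff (hp : L.Presents X) (hG : L.G.Essential) {w : List A} :
    InLang X w ↔ ∃ u v, L.Walk w u v := by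
  constructor
  · rintro ⟨x, hx, i, hw⟩
    rw [hp] at hx
    obtain ⟨ξ, hξ, hlabel⟩ := hx
    exact ⟨_, walk_of_occursAt hξ hlabel hw⟩
  · rintro ⟨u, v, h⟩
    obtain ⟨f, hf0, hf, hfw⟩ := h.exists_ray hG
    obtain ⟨b, hb0, hb⟩ := hG.exists_backward_ray u
    let ξ : ℤ → L.G.E := Int.rec f b
    have hξ : ξ ∈ L.G.edgeShift := by
      rintro (n | (- | n))
      exacts [hf n, hb0.trans hf0.symm, hb n]
    refine ⟨fun i => L.label (ξ i), ?_, 0, fun k hk => ?_⟩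
    · rw [hp]
      exact ⟨ξ, hξ, fun _ => rfl⟩
    · rw [zero_add]
      exact hfw k hk

theorem isClosed_label_eqOn [TopologicalSpace L.G.E] [DiscreteTopology L.G.E] (x : ℤ → A)
    (s : Set ℤ) : IsClosed { ξ : ℤ → L.G.E | ∀ i ∈ s, L.label (ξ i) = x i } := by
  simp only [Set.ofPred_forall]
  exact isClosed_iInter fun i => isClosed_iInter fun _ =>
    (isClosed_discrete { e | L.label e = x i }).preimage (f := fun ξ : ℤ → L.G.E => ξ i)
      (continuous_apply i)

/-- Compactness yields a bi-infinite path from paths carrying longer and longer central blocks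
of `x`. -/
theorem Presents.mem_of_forall_inLang (hp : L.Presents X) {x : ℤ → A}
    (hx : ∀ w, occursIn w x → InLang X w) : x ∈ X := by
  let _ : TopologicalSpace L.G.E := ⊥
  have : DiscreteTopology L.G.E := ⟨rfl⟩
  let C : ℕ → Set (ℤ → L.G.E) := fun n =>
    L.G.edgeShift ∩ { ξ | ∀ i ∈ Set.Ico (-n : ℤ) n, L.label (ξ i) = x i }
  have hC_anti : ∀ n, C (n + 1) ⊆ C n := fun n ξ hξ =>
    ⟨hξ.1, fun i hi => hξ.2 i (Set.Ico_subset_Ico (by lia) (by lia) hi)⟩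
  have hC_nonempty : ∀ n, (C n).Nonempty := by
    intro n
    let w := List.ofFn fun k : Fin (2 * n) => x (-n + (k : ℕ))
    obtain ⟨y, hy, j, hyw⟩ := hx w ⟨-n, fun k hk => by simp [w]⟩
    rw [hp] at hy
    obtain ⟨ξ, hξ, hlabel⟩ := hy
    refine ⟨fun i => ξ (i + (j + n)), fun i => ?_, fun i ⟨hi, hi'⟩ => ?_⟩
    · rw [hξ, add_right_comm]
    · obtain ⟨k, hk⟩ := Int.eq_ofNat_of_zero_le (a := i + n) (by lia)
      have := hyw k (by simp [w]; lia)
      rw [hlabel, show i + (j + n) = j + k by lia, this]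
      simp [w, show -(n : ℤ) + k = i by lia]
  have hC_closed : ∀ n, IsClosed (C n) := fun n =>
    L.G.isClosed_edgeShift.inter (isClosed_label_eqOn x _)
  obtain ⟨ξ, hξ⟩ := IsCompact.nonempty_iInter_of_sequence_nonempty_isCompact_isClosed C hC_anti
    hC_nonempty (hC_closed 0).isCompact hC_closed
  rw [Set.mem_iInter] at hξ
  rw [hp]
  exact ⟨ξ, (hξ 0).1, fun i => (hξ (i.natAbs + 1)).2 i ⟨by lia, by lia⟩⟩

/-! ### Merging vertices with equal follower sets -/

/-- The triple recording an edge of `L` up to equality of follower sets of its ends. -/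
def edgeClass (L : LGraph A) (e : L.G.E) : Set (List A) × A × Set (List A) :=
  (L.followerSet (L.G.src e), L.label e, L.followerSet (L.G.tgt e))

/-- The merged graph of `L`, whose vertices are the follower sets of vertices of `L`. Parallel
edges with equal labels are identified, which keeps it right-resolving. -/
noncomputable def merged (L : LGraph A) : LGraph A where
  G :=
    { V := Set.range L.followerSet
      E := Set.range L.edgeClass
      fintypeV := Fintype.ofFinite _
      fintypeE := Fintype.ofFinite _
      src := fun c => ⟨c.1.1, by obtain ⟨_, e, rfl⟩ := c; exact ⟨L.G.src e, rfl⟩⟩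
      tgt := fun c => ⟨c.1.2.2, by obtain ⟨_, e, rfl⟩ := c; exact ⟨L.G.tgt e, rfl⟩⟩ }
  label := fun c => c.1.2.1

theorem RightResolving.merged (hr : L.RightResolving) : L.merged.RightResolving := by
  rintro ⟨-, e, rfl⟩ ⟨-, f, rfl⟩ hsrc hlabel
  replace hsrc : L.followerSet (L.G.src e) = L.followerSet (L.G.src f) :=
    congrArg Subtype.val hsrc
  replace hlabel : L.label e = L.label f := hlabel
  have htgt : L.followerSet (L.G.tgt e) = L.followerSet (L.G.tgt f) := by
    ext w
    rw [← hr.label_cons_mem_followerSet, ← hr.label_cons_mem_followerSet, hsrc, hlabel]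
  exact Subtype.ext (by simp only [edgeClass, hsrc, hlabel, htgt])

theorem mem_src_merged_of_occursAt {x : ℤ → A} {η : ℤ → L.merged.G.E}
    (hη : η ∈ L.merged.G.edgeShift) (hlabel : ∀ i, L.merged.label (η i) = x i) {w : List A}
    {i : ℤ} (hw : occursAt w x i) : w ∈ (L.merged.G.src (η i)).1 := by
  induction w generalizing i with
  | nil =>
    obtain ⟨v, hv⟩ := (L.merged.G.src (η i)).2
    exact hv ▸ ⟨v, rfl⟩
  | cons a w ih =>
    obtain ⟨hxi, hw⟩ := occursAt_cons.1 hw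
    have htgt := ih hw
    rw [← hη i] at htgt
    have hlabel_i := (hlabel i).trans hxi
    revert htgt hlabel_i
    obtain ⟨_, e, rfl⟩ := η i
    exact fun htgt hlabel_i => cons_mem_followerSet.2 ⟨e, rfl, hlabel_i, htgt⟩

theorem Presents.merged (hp : L.Presents X) (hG : L.G.Essential) : L.merged.Presents X := by
  refine Set.Subset.antisymm (fun x hx => ?_) ?_
  · rw [hp] at hx
    obtain ⟨ξ, hξ, hlabel⟩ := hx
    refine ⟨fun i => ⟨L.edgeClass (ξ i), ξ i, rfl⟩, fun i => Subtype.ext ?_, hlabel⟩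
    exact congrArg L.followerSet (hξ i)
  · rintro x ⟨η, hη, hlabel⟩
    refine hp.mem_of_forall_inLang fun w ⟨i, hw⟩ => (hp.inLang_iff hG).2 ?_
    obtain ⟨v, hv⟩ := (L.merged.G.src (η i)).2
    have hwv : w ∈ L.followerSet v := hv ▸ mem_src_merged_of_occursAt hη hlabel hw
    exact ⟨v, hwv⟩

theorem _root_.IsFischerCover.followerSet_injective (hF : IsFischerCover L X)
    (hG : L.G.Essential) : Function.Injective L.followerSet := by
  obtain ⟨-, hr, hp, hmin⟩ := hF
  have hcard := hmin L.merged hr.merged (hp.merged hG)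
  rw [← Nat.card_eq_fintype_card, ← Nat.card_eq_fintype_card] at hcard
  exact Set.rangeFactorization_injective.1
    (Set.rangeFactorization_surjective.bijective_of_nat_card_le hcard).1

/-! ### Synchronizing words -/

theorem RightResolving.ncard_terminals_append_lt (hr : L.RightResolving) {w x : List A}
    {v : L.G.V} (hv : v ∈ L.terminals w) (hx : x ∉ L.followerSet v) :
    (L.terminals (w ++ x)).ncard < (L.terminals w).ncard := by
  have hprev : ∀ z ∈ L.terminals (w ++ x), ∃ m ∈ L.terminals w, L.Walk x m z :=
    fun z hz => mem_terminals_append.1 hz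
  choose! prev hprev_mem hprev_walk using hprev
  calc (L.terminals (w ++ x)).ncard
      ≤ (L.terminals w \ {v}).ncard := by
        refine Set.ncard_le_ncard_of_injOn prev (fun z hz => ⟨hprev_mem z hz, ?_⟩) ?_
        · rintro rfl
          exact hx ⟨z, hprev_walk z hz⟩
        · intro z hz z' hz' h
          exact hr.walk_unique (hprev_walk z hz) (h ▸ hprev_walk z' hz')
    _ < (L.terminals w).ncard := Set.ncard_sdiff_singleton_lt_of_mem hv

theorem RightResolving.exists_terminals_eq_singleton (hr : L.RightResolving)
    (hi : L.G.Irreducible) (hsep : Function.Injective L.followerSet) (v : L.G.V) :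
    ∃ w, L.terminals w = {v} := by
  obtain ⟨w, ⟨u, hu⟩, hmin⟩ := exists_minimalFor_of_wellFoundedLT
    (fun w => (L.terminals w).Nonempty) (fun w => (L.terminals w).ncard) ⟨[], v, v, rfl⟩
  have hsub : ∀ a ∈ L.terminals w, ∀ b ∈ L.terminals w, L.followerSet a ⊆ L.followerSet b := by
    rintro a ha b hb x ⟨z, hz⟩
    by_contra hx
    have hlt := hr.ncard_terminals_append_lt hb hx
    exact hlt.not_ge (hmin ⟨z, mem_terminals_append.2 ⟨a, ha, hz⟩⟩ hlt.le)
  have hw : L.terminals w = {u} := Set.eq_singleton_iff_unique_mem.2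
    ⟨hu, fun a ha => hsep ((hsub a ha u hu).antisymm (hsub u hu a ha))⟩
  obtain ⟨w', hw'⟩ := exists_walk hi u v
  exact ⟨w ++ w', hr.terminals_append_eq_singleton hw hw'⟩

theorem Presents.terminals_subsingleton (hp : L.Presents X) (hG : L.G.Essential)
    (hr : L.RightResolving) (hi : L.G.Irreducible) (hsep : Function.Injective L.followerSet)
    {s : List A} (hs : ∀ u w, InLang X (u ++ s) → InLang X (s ++ w) → InLang X (u ++ s ++ w)) :
    (L.terminals s).Subsingleton := by
  have hsub : ∀ a ∈ L.terminals s, ∀ b ∈ L.terminals s, L.followerSet a ⊆ L.followerSet b := by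
    rintro a ⟨q, hqa⟩ b ⟨q', hqb⟩ x ⟨z, hz⟩
    obtain ⟨p, hp_eq⟩ := hr.exists_terminals_eq_singleton hi hsep q'
    have hps : L.terminals (p ++ s) = {b} := hr.terminals_append_eq_singleton hp_eq hqb
    obtain ⟨q'', hq''⟩ : b ∈ L.terminals (p ++ s) := hps ▸ rfl
    have hlang := hs p x ((hp.inLang_iff hG).2 ⟨q'', b, hq''⟩)
      ((hp.inLang_iff hG).2 ⟨q, z, walk_append.2 ⟨a, hqa, hz⟩⟩)
    obtain ⟨c, d, hcd⟩ := (hp.inLang_iff hG).1 hlang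
    obtain ⟨m, hm, hmd⟩ := walk_append.1 hcd
    obtain rfl : m = b := hps.subset ⟨c, hm⟩
    exact ⟨d, hmd⟩
  exact fun a ha b hb => hsep ((hsub a ha b hb).antisymm (hsub b hb a ha))

end LGraph

/-! ### The limiting equivalence -/

theorem simRel_refl (G : FinGraph) (n : ℕ) (I : G.V) : simRel G n I I := by
  cases n with
  | zero => trivial
  | succ n => exact fun _ => rfl

theorem simLim_refl (G : FinGraph) (I : G.V) : simLim G I I := fun n => simRel_refl G n I

open scoped Classical in
theorem LGraph.RightResolving.ncard_src_eq_and_tgt {A : Type} [Fintype A] {L : LGraph A}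
    (hr : L.RightResolving) (v : L.G.V) (P : L.G.V → Prop) :
    { e : L.G.E | L.G.src e = v ∧ P (L.G.tgt e) }.ncard =
      ∑ a, if ∃ e, L.G.src e = v ∧ L.label e = a ∧ P (L.G.tgt e) then 1 else 0 := by
  have hinj : Set.InjOn L.label { e : L.G.E | L.G.src e = v ∧ P (L.G.tgt e) } :=
    fun e he f hf h => hr e f (he.1.trans hf.1.symm) h
  rw [← hinj.ncard_image, Set.ncard_eq_toFinset_card', Finset.sum_boole, Nat.cast_id]
  congr 1
  ext a
  simp only [Set.mem_toFinset, Set.mem_image, Set.mem_ofPred_eq, Finset.mem_filter_univ]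
  grind

theorem apply_map_eq_of_injective_of_le {α β : Type*} [Finite α] [PartialOrder β] {g : α → α}
    (hg : Function.Injective g) {f : α → β} (hf : ∀ a, f a ≤ f (g a)) (a : α) :
    f (g a) = f a := by
  have hmono : ∀ n b, f b ≤ f (g^[n] b) := by
    intro n b
    induction n with
    | zero => exact le_rfl
    | succ n ih => exact ih.trans (Function.iterate_succ_apply' g n b ▸ hf _)
  obtain ⟨- | n, hn, hperiod⟩ := hg.mem_periodicPts a
  · exact absurd hn (lt_irrefl 0)
  · exact ((hmono n (g a)).trans_eq (congrArg f hperiod)).antisymm (hf a)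

/-! ### Binary graphs whose `1`-edges share their end -/

namespace LGraph

variable {L : LGraph (Fin 2)} {r : L.G.V}

open scoped Classical in
/-- The end of the `0`-edge at `v`, or `r` if there is none; `r` is meant to be the common end of
the edges labeled `1`. -/
noncomputable def zeroSucc (L : LGraph (Fin 2)) (r v : L.G.V) : L.G.V :=
  if h : ∃ e, L.G.src e = v ∧ L.label e = 0 then L.G.tgt h.choose else r

theorem RightResolving.zeroSucc_src (hr : L.RightResolving) {e : L.G.E} (he : L.label e = 0) :
    L.zeroSucc r (L.G.src e) = L.G.tgt e := by
  have h : ∃ f, L.G.src f = L.G.src e ∧ L.label f = 0 := ⟨e, rfl, he⟩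
  rw [zeroSucc, dif_pos h, hr _ _ h.choose_spec.1 (h.choose_spec.2.trans he.symm)]

theorem zeroSucc_of_not_exists {v : L.G.V} (h : ¬ ∃ e, L.G.src e = v ∧ L.label e = 0) :
    L.zeroSucc r v = r :=
  dif_neg h

open scoped Classical in
theorem RightResolving.ncard_src_eq_and_tgt_of_one (hr : L.RightResolving)
    (h1 : ∀ e, L.label e = 1 → L.G.tgt e = r) (v : L.G.V) (P : L.G.V → Prop) :
    { e : L.G.E | L.G.src e = v ∧ P (L.G.tgt e) }.ncard =
      (if (∃ e, L.G.src e = v ∧ L.label e = 0) ∧ P (L.zeroSucc r v) then 1 else 0) +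
      (if (∃ e, L.G.src e = v ∧ L.label e = 1) ∧ P r then 1 else 0) := by
  have h_zero : (∃ e, L.G.src e = v ∧ L.label e = 0 ∧ P (L.G.tgt e)) ↔
      (∃ e, L.G.src e = v ∧ L.label e = 0) ∧ P (L.zeroSucc r v) := by
    constructor
    · rintro ⟨e, rfl, he, hP⟩
      exact ⟨⟨e, rfl, he⟩, by rwa [hr.zeroSucc_src he]⟩
    · rintro ⟨⟨e, rfl, he⟩, hP⟩
      exact ⟨e, rfl, he, by rwa [hr.zeroSucc_src he] at hP⟩
  have h_one : (∃ e, L.G.src e = v ∧ L.label e = 1 ∧ P (L.G.tgt e)) ↔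
      (∃ e, L.G.src e = v ∧ L.label e = 1) ∧ P r := by
    grind
  rw [hr.ncard_src_eq_and_tgt, Fin.sum_univ_two]
  simp only [h_zero, h_one]

open scoped Classical in
theorem RightResolving.outDegree_eq_of_simLim (hr : L.RightResolving)
    (h1 : ∀ e, L.label e = 1 → L.G.tgt e = r) {I J : L.G.V} (h : simLim L.G I J) :
    (if ∃ e, L.G.src e = I ∧ L.label e = 0 then 1 else 0) +
        (if ∃ e, L.G.src e = I ∧ L.label e = 1 then 1 else 0) =
      (if ∃ e, L.G.src e = J ∧ L.label e = 0 then 1 else 0) +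
        (if ∃ e, L.G.src e = J ∧ L.label e = 1 then 1 else 0) := by
  have hcard : { e | L.G.src e = I ∧ True }.ncard = { e | L.G.src e = J ∧ True }.ncard := h 1 I
  have hout := fun v => hr.ncard_src_eq_and_tgt_of_one h1 v fun _ => True
  rw [hout I, hout J] at hcard
  simpa only [and_true] using hcard

theorem RightResolving.simLim_zeroSucc (hr : L.RightResolving)
    (h1 : ∀ e, L.label e = 1 → L.G.tgt e = r) {I J : L.G.V} (h : simLim L.G I J) :
    simLim L.G (L.zeroSucc r I) (L.zeroSucc r J) := by
  classical
  intro n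
  have hdeg := hr.outDegree_eq_of_simLim h1 h
  have hcount := h (n + 1) (L.zeroSucc r J)
  simp only [hr.ncard_src_eq_and_tgt_of_one h1 _ fun z => simRel L.G n z (L.zeroSucc r J)]
    at hcount
  have hrefl := simRel_refl L.G n
  -- If exactly one of `I`, `J` has no `0`-edge, then, out-degrees being equal, it alone has a
  -- `1`-edge, and the count matches that edge with the `0`-edge of the other.
  by_cases hI : ∃ e, L.G.src e = I ∧ L.label e = 0 <;>
    by_cases hJ : ∃ e, L.G.src e = J ∧ L.label e = 0 <;>
    by_cases hI1 : ∃ e, L.G.src e = I ∧ L.label e = 1 <;>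
    by_cases hJ1 : ∃ e, L.G.src e = J ∧ L.label e = 1 <;>
    simp_all [zeroSucc_of_not_exists]

theorem RightResolving.mem_followerSet_iff_of_simLim (hr : L.RightResolving)
    (h1 : ∀ e, L.label e = 1 → L.G.tgt e = r)
    (h0 : ∀ v, ∃ e, L.G.src e = v ∧ L.label e = 0) {I J : L.G.V} (h : simLim L.G I J)
    {w : List (Fin 2)} : w ∈ L.followerSet I ↔ w ∈ L.followerSet J := by
  induction w generalizing I J with
  | nil => exact ⟨fun _ => ⟨J, rfl⟩, fun _ => ⟨I, rfl⟩⟩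
  | cons a w ih =>
    rcases Fin.exists_fin_two.1 ⟨a, rfl⟩ with rfl | rfl
    · have hzero : ∀ v, 0 :: w ∈ L.followerSet v ↔ w ∈ L.followerSet (L.zeroSucc r v) := by
        intro v
        obtain ⟨e, rfl, he⟩ := h0 v
        rw [hr.zeroSucc_src he, ← he, hr.label_cons_mem_followerSet]
      rw [hzero, hzero]
      exact ih (hr.simLim_zeroSucc h1 h)
    · have hone : ∀ v, 1 :: w ∈ L.followerSet v ↔
          (∃ e, L.G.src e = v ∧ L.label e = 1) ∧ w ∈ L.followerSet r := by
        intro v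
        rw [cons_mem_followerSet]
        grind
      have hout : (∃ e, L.G.src e = I ∧ L.label e = 1) ↔ ∃ e, L.G.src e = J ∧ L.label e = 1 := by
        have hdeg := hr.outDegree_eq_of_simLim h1 h
        rw [if_pos (h0 I), if_pos (h0 J)] at hdeg
        split_ifs at hdeg with hI hJ hJ
        exacts [iff_of_true hI hJ, by lia, by lia, iff_of_false hI hJ]
      rw [hone, hone, hout]

theorem RightResolving.exists_iterate_zeroSucc_eq (hr : L.RightResolving) (hi : L.G.Irreducible)
    (h1 : ∀ e, L.label e = 1 → L.G.tgt e = r) (v : L.G.V) :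
    ∃ n, (L.zeroSucc r)^[n] r = v := by
  induction hi r v with
  | refl => exact ⟨0, rfl⟩
  | tail _ h ih =>
    obtain ⟨e, rfl, rfl⟩ := h
    obtain ⟨n, hn⟩ := ih
    rcases Fin.exists_fin_two.1 ⟨L.label e, rfl⟩ with he | he
    · exact ⟨n + 1, by rw [Function.iterate_succ_apply', hn, hr.zeroSucc_src he]⟩
    · exact ⟨0, (h1 e he).symm⟩

theorem RightResolving.ncard_simLim_le_zeroSucc (hr : L.RightResolving)
    (h1 : ∀ e, L.label e = 1 → L.G.tgt e = r) (hinj : Function.Injective (L.zeroSucc r))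
    (v : L.G.V) :
    { u | simLim L.G u v }.ncard ≤ { u | simLim L.G u (L.zeroSucc r v) }.ncard :=
  Set.ncard_le_ncard_of_injOn (L.zeroSucc r) (fun _ hu => hr.simLim_zeroSucc h1 hu) hinj.injOn

theorem RightResolving.ncard_simLim_eq_of_not_exists (hr : L.RightResolving)
    (hi : L.G.Irreducible) (h1 : ∀ e, L.label e = 1 → L.G.tgt e = r) {z : L.G.V}
    (hz : ¬ ∃ e, L.G.src e = z ∧ L.label e = 0) (v : L.G.V) :
    { u | simLim L.G u v }.ncard = { u | simLim L.G u r }.ncard := by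
  have hsurj : Function.Surjective (L.zeroSucc r) := by
    intro u
    obtain ⟨- | n, rfl⟩ := hr.exists_iterate_zeroSucc_eq hi h1 u
    · exact ⟨z, zeroSucc_of_not_exists hz⟩
    · exact ⟨_, (Function.iterate_succ_apply' ..).symm⟩
  have hinj := Finite.injective_iff_surjective.2 hsurj
  have hinv := apply_map_eq_of_injective_of_le hinj (hr.ncard_simLim_le_zeroSucc h1 hinj)
  obtain ⟨n, rfl⟩ := hr.exists_iterate_zeroSucc_eq hi h1 v
  induction n with
  | zero => rfl
  | succ n ih => rw [Function.iterate_succ_apply', ← ih, hinv]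

theorem RightResolving.ncard_simLim_eq (hr : L.RightResolving) (hi : L.G.Irreducible)
    (hsep : Function.Injective L.followerSet) (h1 : ∀ e, L.label e = 1 → L.G.tgt e = r)
    (I J : L.G.V) : { u | simLim L.G u I }.ncard = { u | simLim L.G u J }.ncard := by
  by_cases h0 : ∀ v, ∃ e, L.G.src e = v ∧ L.label e = 0
  · have hclass : ∀ v, { u | simLim L.G u v } = {v} := fun v =>
      Set.eq_singleton_iff_unique_mem.2 ⟨simLim_refl _ v, fun _ hu =>
        hsep (Set.ext fun _ => hr.mem_followerSet_iff_of_simLim h1 h0 hu)⟩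
    rw [hclass, hclass, Set.ncard_singleton, Set.ncard_singleton]
  · obtain ⟨z, hz⟩ := not_forall.1 h0
    rw [hr.ncard_simLim_eq_of_not_exists hi h1 hz I, hr.ncard_simLim_eq_of_not_exists hi h1 hz J]

end LGraph

/-! ### Gap shifts -/

theorem SGap.splice_mem {S : Set ℕ} {x y : ℤ → Fin 2} (hx : x ∈ SGap S) (hy : y ∈ SGap S)
    {c d : ℤ} (hc : x c = 1) (hd : y d = 1) :
    (fun k => if k ≤ c then x k else y (k - c + d)) ∈ SGap S := by
  set z : ℤ → Fin 2 := fun k => if k ≤ c then x k else y (k - c + d)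
  have hz_left : ∀ k ≤ c, z k = x k := fun k hk => if_pos hk
  have hz_right : ∀ k ≥ c, z k = y (k - c + d) := by
    intro k hk
    rcases hk.eq_or_lt with rfl | hk
    · rw [hz_left c le_rfl, hc, sub_self, zero_add, hd]
    · exact if_neg hk.not_ge
  refine ⟨fun i j hij hi hj hgap => ?_, fun hS => ⟨fun N => ?_, fun N => ?_⟩⟩
  · rcases le_or_gt j c with hjc | hcj
    · exact hx.1 i j hij (hz_left i (by lia) ▸ hi) (hz_left j hjc ▸ hj) fun k hik hkj =>
        hz_left k (by lia) ▸ hgap k hik hkj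
    · have hci : c ≤ i := by
        by_contra! hic
        have hzc := hgap c hic hcj
        rw [hz_left c le_rfl, hc] at hzc
        exact one_ne_zero hzc
      have hmem := hy.1 (i - c + d) (j - c + d) (by lia) (hz_right i hci ▸ hi)
        (hz_right j hcj.le ▸ hj) fun k hik hkj => by
          have := hgap (k + c - d) (by lia) (by lia)
          rwa [hz_right _ (by lia), show k + c - d - c + d = k by lia] at this
      rwa [show j - c + d - (i - c + d) - 1 = j - i - 1 by lia] at hmem
  · obtain ⟨i, hi, hyi⟩ := (hy.2 hS).1 (max d (N - c + d))
    refine ⟨i + c - d, by lia, ?_⟩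
    rw [hz_right _ (by lia), show i + c - d - c + d = i by lia, hyi]
  · obtain ⟨i, hi, hxi⟩ := (hx.2 hS).2 (min c N)
    exact ⟨i, by lia, (hz_left i (by lia)).trans hxi⟩

theorem SGap.inLang_append_of_one {S : Set ℕ} {u w : List (Fin 2)}
    (hu : InLang (SGap S) (u ++ [1])) (hw : InLang (SGap S) ([1] ++ w)) :
    InLang (SGap S) (u ++ [1] ++ w) := by
  obtain ⟨x, hx, i, hxu⟩ := hu
  obtain ⟨y, hy, d, hyw⟩ := hw
  have hc : x (i + u.length) = 1 := by simpa using hxu u.length (by simp)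
  rw [List.singleton_append, occursAt_cons] at hyw
  obtain ⟨hd, hyw⟩ := hyw
  refine ⟨_, splice_mem hx hy hc hd, i,
    occursAt_append.2 ⟨fun k hk => ?_, fun k hk => ?_⟩⟩
  · rw [← hxu k hk]
    rw [List.length_append, List.length_singleton] at hk
    exact if_pos (by lia)
  · rw [← hyw k hk, List.length_append, List.length_singleton]
    exact (if_neg (by lia)).trans (congrArg y (by lia))

theorem sgap_MG_states_same_card_general {X : Set (ℤ → Fin 2)}
    (hsync : ∀ u w, InLang X (u ++ [1]) → InLang X ([1] ++ w) → InLang X (u ++ [1] ++ w))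
    {𝒢 : LGraph (Fin 2)} (hF : IsFischerCover 𝒢 X) (I J : 𝒢.G.V) :
    { I' | simLim 𝒢.G I' I }.ncard = { J' | simLim 𝒢.G J' J }.ncard := by
  rcases subsingleton_or_nontrivial 𝒢.G.V with _ | _
  · rw [Subsingleton.elim I J]
  · have ⟨hi, hr, hp, _⟩ := hF
    have hsep := hF.followerSet_injective hi.essential
    have hone := hp.terminals_subsingleton hi.essential hr hi hsep hsync
    have hmem : ∀ e, 𝒢.label e = 1 → 𝒢.G.tgt e ∈ 𝒢.terminals [1] :=
      fun e he => ⟨𝒢.G.src e, e, rfl, he, rfl⟩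
    obtain ⟨r, h1⟩ : ∃ r, ∀ e, 𝒢.label e = 1 → 𝒢.G.tgt e = r := by
      rcases hone.eq_empty_or_singleton with h | ⟨r, h⟩
      · exact ⟨I, fun e he => absurd (hmem e he) (h ▸ Set.notMem_empty _)⟩
      · exact ⟨r, fun e he => h.subset (hmem e he)⟩
    exact hr.ncard_simLim_eq hi hsep h1 I J

/-- If `X(S)` is sofic with Fischer cover `𝒢 = (G, ℒ)`, then every
state of `M_G` (i.e., every class of the limiting partition of the vertices of `G`)
contains the same number of vertices of `G`. -/
theorem sgap_MG_states_same_card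
    (S : Set ℕ) (hsofic : IsSofic (SGap S))
    (𝒢 : LGraph (Fin 2)) (hF : IsFischerCover 𝒢 (SGap S)) :
    ∀ I J : 𝒢.G.V,
      { I' : 𝒢.G.V | simLim 𝒢.G I' I }.ncard = { J' : 𝒢.G.V | simLim 𝒢.G J' J }.ncard := by
  exact sgap_MG_states_same_card_general (fun _ _ => SGap.inLang_append_of_one) hF
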